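/- For every δ > 0 there exists ε > 0 such that the unit-density instance 𝓘 of the oblivious knapsack problem with five items of values v₁ = 1+ε, v₂ = 1+ε, v₃ = 2/φ, v₄ = 1+1/φ², v₅ = φ (sizes equal to values) has the following property: for every item i ∈ {1,…,5} there exists a capacity C with v(i) ≤ C ≤ v(𝓘) such that v(i) + v(j) > C for every item j ≠ i (so any packing whose first packed item is i packs only the single item i for capacity C), while v(Opt(𝓘,C)) > (φ − δ)·v(i). -/

import Mathlib

/-!
Since `φ² = φ + 1`, the five values are `1 + ε, 1 + ε, 2φ - 2, 3 - φ, φ`.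
For each first item, take the total of the better packing below as the capacity; the first item
together with any second one exceeds it:

* against `1 + ε`, the single item `φ`: then `φ < 2(1 + ε)`, and the ratio `φ / (1 + ε)` tends
  to `φ` as `ε → 0`;
* against `2φ - 2`, the two items `1 + ε`: the total `2 + 2ε` exceeds `φ (2φ - 2) = 2`;
* against `3 - φ`, the items `1 + ε` and `2φ - 2`: the total `2φ - 1 + ε` exceeds
  `φ (3 - φ) = 2φ - 1`;
* against `φ`, the items `2φ - 2` and `3 - φ`: the total `φ + 1` equals `φ · φ`.

Only the first case requires `ε` to be small compared with `δ`.
-/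

/-- The golden ratio `φ = (1 + √5)/2`. -/
noncomputable def phi : ℝ := (1 + Real.sqrt 5) / 2

theorem phi_sq : phi ^ 2 = phi + 1 := by
  have h := Real.sq_sqrt (show (0 : ℝ) ≤ 5 by norm_num)
  unfold phi
  linarith

theorem phi_gt : 1.6 < phi := by
  have h : (2.2 : ℝ) < Real.sqrt 5 := Real.lt_sqrt_of_sq_lt (by norm_num)
  unfold phi
  linarith

theorem phi_lt : phi < 1.62 := by
  have h : Real.sqrt 5 < 2.24 := (Real.sqrt_lt' (by norm_num)).2 (by norm_num)
  unfold phi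
  linarith

theorem two_div_phi : 2 / phi = 2 * phi - 2 := by
  have h0 : phi ≠ 0 := by linarith [phi_gt]
  rw [div_eq_iff h0]
  linarith [phi_sq]

theorem one_add_inv_phi_sq : 1 + 1 / phi ^ 2 = 3 - phi := by
  have h0 : phi ^ 2 ≠ 0 := by linarith [phi_gt, phi_sq]
  have h : 1 / phi ^ 2 = 2 - phi := by
    rw [div_eq_iff h0, phi_sq]
    linarith [phi_sq]
  linarith

/-- For every `δ > 0` there is an `ε > 0` such that the
unit-density instance with the five items of values
`1+ε, 1+ε, 2/φ, 1+1/φ², φ` (sizes equal values) has the property that for every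
item `i` there is a capacity `C` with `v(i) ≤ C ≤ v(𝓘)` such that no second
item fits after `i` (i.e. `v(i) + v(j) > C` for all `j ≠ i`), while
`v(Opt(𝓘,C)) > (φ − δ)·v(i)`. -/
theorem lower_bound_unit_density_instance (δ : ℝ) (hδ : 0 < δ) :
    ∃ ε : ℝ, 0 < ε ∧
      ∀ v : Fin 5 → ℝ,
        v = ![1 + ε, 1 + ε, 2 / phi, 1 + 1 / phi ^ 2, phi] →
        ∀ i : Fin 5, ∃ C : ℝ, v i ≤ C ∧ C ≤ ∑ j, v j ∧
          (∀ j : Fin 5, j ≠ i → C < v i + v j) ∧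
          ∃ S : Finset (Fin 5), ∑ j ∈ S, v j ≤ C ∧
            (phi - δ) * v i < ∑ j ∈ S, v j := by
  have hsq := phi_sq
  have hgt := phi_gt
  have hlt := phi_lt
  obtain ⟨ε, hε, hε1, hεδ⟩ : ∃ ε : ℝ, 0 < ε ∧ ε ≤ 1 / 10 ∧ ε ≤ δ / 4 :=
    ⟨min (1 / 10) (δ / 4), by positivity, min_le_left _ _, min_le_right _ _⟩
  refine ⟨ε, hε, ?_⟩
  intro v hv
  rw [two_div_phi, one_add_inv_phi_sq] at hv
  have h0 : v 0 = 1 + ε := by rw [hv]; rfl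
  have h1 : v 1 = 1 + ε := by rw [hv]; rfl
  have h2 : v 2 = 2 * phi - 2 := by rw [hv]; rfl
  have h3 : v 3 = 3 - phi := by rw [hv]; rfl
  have h4 : v 4 = phi := by rw [hv]; rfl
  clear hv
  have hsum : ∑ j, v j = 2 * phi + 3 + 2 * ε := by
    rw [Fin.sum_univ_five, h0, h1, h2, h3, h4]
    ring
  have hsmall : (phi - δ) * (1 + ε) < phi := by
    have hφε : phi * ε ≤ phi * (δ / 4) := by gcongr
    nlinarith [mul_pos hδ hε]
  rw [hsum]
  -- The condition on second items, with the five values of `j` listed separately.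
  have hblock : ∀ (i : Fin 5) (C : ℝ), C < v i + v 0 ∨ i = 0 → C < v i + v 1 ∨ i = 1 →
      C < v i + v 2 ∨ i = 2 → C < v i + v 3 ∨ i = 3 → C < v i + v 4 ∨ i = 4 →
      ∀ j : Fin 5, j ≠ i → C < v i + v j := by
    intro i C a0 a1 a2 a3 a4 j hj
    fin_cases j
    · exact a0.resolve_right hj.symm
    · exact a1.resolve_right hj.symm
    · exact a2.resolve_right hj.symm
    · exact a3.resolve_right hj.symm
    · exact a4.resolve_right hj.symm
  intro i
  fin_cases i
  · have hS : ∑ j ∈ ({4} : Finset (Fin 5)), v j = phi := by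
      rw [Finset.sum_singleton, h4]
    refine ⟨phi, ?_, by linarith,
      hblock 0 _ (Or.inr rfl) (Or.inl (by linarith)) (Or.inl (by linarith)) (Or.inl (by linarith)) (Or.inl (by linarith)),
      {4}, hS.le, ?_⟩
    · change v 0 ≤ _
      linarith
    · change (phi - δ) * v 0 < _
      rw [hS, h0]
      exact hsmall
  · have hS : ∑ j ∈ ({4} : Finset (Fin 5)), v j = phi := by
      rw [Finset.sum_singleton, h4]
    refine ⟨phi, ?_, by linarith,
      hblock 1 _ (Or.inl (by linarith)) (Or.inr rfl) (Or.inl (by linarith)) (Or.inl (by linarith)) (Or.inl (by linarith)),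
      {4}, hS.le, ?_⟩
    · change v 1 ≤ _
      linarith
    · change (phi - δ) * v 1 < _
      rw [hS, h1]
      exact hsmall
  · have hS : ∑ j ∈ ({0, 1} : Finset (Fin 5)), v j = 2 + 2 * ε := by
      rw [Finset.sum_pair (by decide), h0, h1]; ring
    refine ⟨2 + 2 * ε, ?_, by linarith,
      hblock 2 _ (Or.inl (by linarith)) (Or.inl (by linarith)) (Or.inr rfl) (Or.inl (by linarith)) (Or.inl (by linarith)),
      {0, 1}, hS.le, ?_⟩
    · change v 2 ≤ _
      linarith
    · change (phi - δ) * v 2 < _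
      rw [hS, h2]
      nlinarith
  · have hS : ∑ j ∈ ({0, 2} : Finset (Fin 5)), v j = 2 * phi - 1 + ε := by
      rw [Finset.sum_pair (by decide), h0, h2]; ring
    refine ⟨2 * phi - 1 + ε, ?_, by linarith,
      hblock 3 _ (Or.inl (by linarith)) (Or.inl (by linarith)) (Or.inl (by linarith)) (Or.inr rfl) (Or.inl (by linarith)),
      {0, 2}, hS.le, ?_⟩
    · change v 3 ≤ _
      linarith
    · change (phi - δ) * v 3 < _
      rw [hS, h3]
      nlinarith
  · have hS : ∑ j ∈ ({2, 3} : Finset (Fin 5)), v j = phi + 1 := by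
      rw [Finset.sum_pair (by decide), h2, h3]; ring
    refine ⟨phi + 1, ?_, by linarith,
      hblock 4 _ (Or.inl (by linarith)) (Or.inl (by linarith)) (Or.inl (by linarith)) (Or.inl (by linarith)) (Or.inr rfl),
      {2, 3}, hS.le, ?_⟩
    · change v 4 ≤ _
      linarith
    · change (phi - δ) * v 4 < _
      rw [hS, h4]
      nlinarith
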